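/- arXiv:1202.0153 — 2 statements merged into one kernel-verified Lean document; each statement's English description precedes it below -/
import Mathlib

section
/- Let d ≥ 1. Every finite family of pairwise non-overlapping closed balls in ℝ^d with positive radii admits a colouring with 3^d colours such that any two touching balls receive different colours. -/
open MeasureTheory Metric Module

/-- A volume bound: points at mutual distance at least `2 * ρ` in a closed ball of radius `2 * ρ`
in a `d`-dimensional normed space number at most `3 ^ d`. -/
theorem card_le_three_pow_finrank {ι E : Type*} [NormedAddCommGroup E] [NormedSpace ℝ E]
    [FiniteDimensional ℝ E] (s : Finset ι) (p : ι → E) (x : E) {ρ : ℝ} (hρ : 0 < ρ)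
    (hx : ∀ i ∈ s, dist (p i) x ≤ 2 * ρ)
    (hp : ∀ i ∈ s, ∀ j ∈ s, i ≠ j → 2 * ρ ≤ dist (p i) (p j)) :
    s.card ≤ 3 ^ finrank ℝ E := by
  borelize E
  let μ : Measure E := Measure.addHaar
  have hdisj : (s : Set ι).PairwiseDisjoint fun i => ball (p i) ρ := fun i hi j hj hij =>
    ball_disjoint_ball (by linarith [hp i hi j hj hij])
  have hsub : (⋃ i ∈ s, ball (p i) ρ) ⊆ ball x (3 * ρ) :=
    Set.iUnion₂_subset fun i hi => ball_subset_ball' (by linarith [hx i hi])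
  have hμ : (s.card : ℝ) * μ.real (ball 0 ρ) ≤ 3 ^ finrank ℝ E * μ.real (ball 0 ρ) :=
    calc (s.card : ℝ) * μ.real (ball 0 ρ) = ∑ i ∈ s, μ.real (ball (p i) ρ) := by
          simp [Measure.real, Measure.addHaar_ball_center]
      _ = μ.real (⋃ i ∈ s, ball (p i) ρ) :=
          (measureReal_biUnion_finset hdisj (fun _ _ => measurableSet_ball)
            fun _ _ => measure_ball_lt_top.ne).symm
      _ ≤ μ.real (ball x (3 * ρ)) := measureReal_mono hsub measure_ball_lt_top.ne
      _ = 3 ^ finrank ℝ E * μ.real (ball 0 ρ) := by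
          rw [Measure.real, Measure.addHaar_ball_mul_of_pos μ x three_pos, ENNReal.toReal_mul,
            ENNReal.toReal_ofReal (by positivity), Measure.real]
  have hpos : 0 < μ.real (ball (0 : E) ρ) :=
    ENNReal.toReal_pos (measure_ball_pos μ 0 hρ).ne' measure_ball_lt_top.ne
  exact_mod_cast le_of_mul_le_mul_right hμ hpos

/-- A ball touches fewer than `3 ^ d` members of a non-overlapping family of balls that are at
least as large as itself. -/
theorem card_touching_lt_three_pow_finrank {ι E : Type*} [NormedAddCommGroup E] [NormedSpace ℝ E]
    [FiniteDimensional ℝ E] (c : ι → E) (r : ι → ℝ) (a : ι) (ha : 0 < r a)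
    (hsep : ∀ i j, i ≠ j → r i + r j ≤ dist (c i) (c j))
    (s : Finset ι) (has : a ∉ s) (hle : ∀ i ∈ s, r a ≤ r i)
    (htouch : ∀ i ∈ s, dist (c a) (c i) = r a + r i) :
    s.card < 3 ^ finrank ℝ E := by
  classical
  -- the centre of the ball of radius `r a` inside the `i`-th ball that touches the `a`-th ball
  let p : ι → E := fun i => AffineMap.lineMap (c a) (c i) (2 * r a / dist (c a) (c i))
  have hpa : p a = c a := by simp [p]
  have hdist : ∀ i ∈ s, dist (p i) (c a) = 2 * r a := fun i hi => by
    have hpos : 0 < dist (c a) (c i) := by linarith [htouch i hi, hle i hi]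
    rw [dist_lineMap_left, Real.norm_of_nonneg (by positivity), div_mul_cancel₀ _ hpos.ne']
  have hdist' : ∀ i ∈ s, dist (p i) (c i) = r i - r a := fun i hi => by
    have hpos : 0 < dist (c a) (c i) := by linarith [htouch i hi, hle i hi]
    have h1 : 2 * r a / dist (c a) (c i) ≤ 1 := by
      rw [div_le_one hpos]; linarith [htouch i hi, hle i hi]
    rw [dist_lineMap_right, Real.norm_of_nonneg (by linarith), sub_mul,
      div_mul_cancel₀ _ hpos.ne', htouch i hi]
    ring
  have hcard := card_le_three_pow_finrank (insert a s) p (c a) ha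
    (fun i hi => by
      rcases Finset.mem_insert.1 hi with rfl | hi
      · rw [hpa, dist_self]; positivity
      · exact (hdist i hi).le)
    (fun i hi j hj hij => by
      rcases Finset.mem_insert.1 hi with rfl | his <;> rcases Finset.mem_insert.1 hj with rfl | hjs
      · exact absurd rfl hij
      · rw [hpa, dist_comm, hdist j hjs]
      · rw [hpa, hdist i his]
      · have := dist_triangle4 (c i) (p i) (p j) (c j)
        rw [dist_comm (c i) (p i), hdist' i his, hdist' j hjs] at this
        linarith [hsep i j hij])
  rw [Finset.card_insert_of_notMem has] at hcard
  omega

/-- For `d ≥ 1`, every finite family of pairwise non-overlapping closed balls in `ℝ^d` with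
positive radii admits a colouring with `3 ^ d` colours such that touching balls receive
different colours. -/
theorem balls_colouring_three_pow (d n : ℕ) (hd : 1 ≤ d)
    (c : Fin n → EuclideanSpace ℝ (Fin d)) (r : Fin n → ℝ)
    (hr : ∀ i, 0 < r i)
    (hsep : ∀ i j : Fin n, i ≠ j → r i + r j ≤ dist (c i) (c j)) :
    ∃ f : Fin n → Fin (3 ^ d),
      ∀ i j : Fin n, i ≠ j → dist (c i) (c j) = r i + r j → f i ≠ f j := by
  classical
  suffices h : ∀ s : Finset (Fin n), ∃ f : Fin n → Fin (3 ^ d),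
      ∀ i ∈ s, ∀ j ∈ s, i ≠ j → dist (c i) (c j) = r i + r j → f i ≠ f j by
    simpa using h Finset.univ
  intro s
  induction s using Finset.induction_on_min_value r with
  | empty => exact ⟨fun _ => 0, by simp⟩
  | insert a s has hmin ih =>
    obtain ⟨f, hf⟩ := ih
    let t := s.filter fun i => dist (c a) (c i) = r a + r i
    have ht : t.card < 3 ^ d := by
      simpa using card_touching_lt_three_pow_finrank c r a (hr a) hsep t
        (fun h => has (Finset.mem_filter.1 h).1)
        (fun i hi => hmin i (Finset.mem_filter.1 hi).1) (fun i hi => (Finset.mem_filter.1 hi).2)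
    obtain ⟨k, hk⟩ : ∃ k, k ∉ t.image f := by
      by_contra! hall
      have := Finset.card_image_le (s := t) (f := f)
      rw [Finset.eq_univ_of_forall hall, Finset.card_univ, Fintype.card_fin] at this
      omega
    have hka : ∀ j ∈ s, dist (c a) (c j) = r a + r j → k ≠ f j := fun j hj hd h =>
      hk (Finset.mem_image.2 ⟨j, Finset.mem_filter.2 ⟨hj, hd⟩, h.symm⟩)
    refine ⟨Function.update f a k, fun i hi j hj hij hd => ?_⟩
    rcases Finset.mem_insert.1 hi with rfl | his <;> rcases Finset.mem_insert.1 hj with rfl | hjs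
    · exact absurd rfl hij
    · rw [Function.update_self, Function.update_of_ne hij.symm]
      exact hka j hjs hd
    · rw [Function.update_self, Function.update_of_ne hij]
      exact (hka i his (by rw [dist_comm, hd, add_comm])).symm
    · rw [Function.update_of_ne (ne_of_mem_of_not_mem his has),
        Function.update_of_ne (ne_of_mem_of_not_mem hjs has)]
      exact hf i his j hjs hij hd
end

section
/- Every finite family of pairwise non-overlapping closed discs in the plane ℝ² with positive radii admits a proper colouring with six colours, i.e. a colouring with 6 colours such that any two touching discs receive different colours (the 'six colours theorem' for discs). -/
/-- Six reals with pairwise distances in `[δ, 5δ]` form an arithmetic progression of step `δ`. -/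
theorem exists_add_mem_of_card_eq_six {S : Finset ℝ} (hS : S.card = 6) {δ : ℝ}
    (hlow : ∀ x ∈ S, ∀ y ∈ S, x < y → δ ≤ y - x)
    (hupp : ∀ x ∈ S, ∀ y ∈ S, x < y → y - x ≤ 5 * δ) :
    ∃ a ∈ S, a + δ ∈ S ∧ a + 3 * δ ∈ S ∧ a + 4 * δ ∈ S := by
  let e := S.orderEmbOfFin hS
  have hmem (k : Fin 6) : e k ∈ S := S.orderEmbOfFin_mem hS k
  have hgap (k l : Fin 6) (h : k < l) : δ ≤ e l - e k :=
    hlow _ (hmem k) _ (hmem l) (e.strictMono h)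
  have h01 := hgap 0 1 (by decide)
  have h12 := hgap 1 2 (by decide)
  have h23 := hgap 2 3 (by decide)
  have h34 := hgap 3 4 (by decide)
  have h45 := hgap 4 5 (by decide)
  have h05 := hupp _ (hmem 0) _ (hmem 5) (e.strictMono (by decide))
  refine ⟨e 0, hmem 0, ?_, ?_, ?_⟩
  · convert hmem 1 using 1; linarith
  · convert hmem 3 using 1; linarith
  · convert hmem 4 using 1; linarith

/-- The law of cosines in the complex plane, with the angle given by arguments. -/
theorem Complex.norm_sub_sq_eq_cos_arg (v w : ℂ) :
    ‖v - w‖ ^ 2 = ‖v‖ ^ 2 + ‖w‖ ^ 2 - 2 * (‖v‖ * ‖w‖) * Real.cos (v.arg - w.arg) := by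
  have hv := Complex.sq_norm v
  have hw := Complex.sq_norm w
  have hd := Complex.sq_norm (v - w)
  rw [Complex.normSq_apply] at hv hw hd
  rw [hd, hv, hw, Real.cos_sub, Complex.sub_re, Complex.sub_im]
  linear_combination 2 * w.re * Complex.norm_mul_cos_arg v
    + 2 * (‖v‖ * Real.cos v.arg) * Complex.norm_mul_cos_arg w
    + 2 * w.im * Complex.norm_mul_sin_arg v
    + 2 * (‖v‖ * Real.sin v.arg) * Complex.norm_mul_sin_arg w

/-- Two non-overlapping discs touching a disc that is not larger than either of them are seen from
its centre at an angle of at least `π / 3`. -/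
theorem cos_arg_sub_arg_le_half {v w : ℂ} {r a b : ℝ} (hr : 0 < r) (ha : r ≤ a) (hb : r ≤ b)
    (hv : ‖v‖ = r + a) (hw : ‖w‖ = r + b) (hvw : a + b ≤ ‖v - w‖) :
    Real.cos (v.arg - w.arg) ≤ 1 / 2 := by
  have h := Complex.norm_sub_sq_eq_cos_arg v w
  rw [hv, hw] at h
  have hpos : 0 < (r + a) * (r + b) := mul_pos (by linarith) (by linarith)
  have hsq : (a + b) ^ 2 ≤ ‖v - w‖ ^ 2 := pow_le_pow_left₀ (by linarith) hvw 2
  by_contra! hc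
  nlinarith [mul_lt_mul_of_pos_left hc hpos, mul_nonneg (sub_nonneg.2 ha) (sub_nonneg.2 hb)]

theorem eq_of_cos_arg_sub_arg_eq_half {v w : ℂ} {r a b : ℝ} (hr : 0 < r) (ha : r ≤ a) (hb : r ≤ b)
    (hv : ‖v‖ = r + a) (hw : ‖w‖ = r + b) (hvw : a + b ≤ ‖v - w‖)
    (hcos : Real.cos (v.arg - w.arg) = 1 / 2) : a = r := by
  have h := Complex.norm_sub_sq_eq_cos_arg v w
  rw [hv, hw, hcos] at h
  have hsq : (a + b) ^ 2 ≤ ‖v - w‖ ^ 2 := pow_le_pow_left₀ (by linarith) hvw 2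
  refine le_antisymm ?_ ha
  by_contra! hlt
  nlinarith [mul_pos (sub_pos.2 hlt) hr, mul_nonneg (sub_nonneg.2 ha) (sub_nonneg.2 hb)]

theorem Real.pi_div_three_le_of_cos_le_half {x : ℝ} (h0 : 0 < x) (h : Real.cos x ≤ 1 / 2) :
    Real.pi / 3 ≤ x := by
  by_contra! hx
  have := Real.cos_lt_cos_of_nonneg_of_le_pi h0.le (by linarith [Real.pi_pos]) hx
  rw [Real.cos_pi_div_three] at this
  linarith

/-- If at least six discs touch a disc that is not larger than any of them, then two of them have
the same radius as that disc and touch it at antipodal points. -/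
theorem exists_antipodal_of_six_le_card {ι : Type*} {N : Finset ι} (hN : 6 ≤ N.card)
    {w : ι → ℂ} {s : ι → ℝ} {r : ℝ} (hr : 0 < r) (hs : ∀ j ∈ N, r ≤ s j)
    (hw : ∀ j ∈ N, ‖w j‖ = r + s j)
    (hsep : ∀ j ∈ N, ∀ k ∈ N, j ≠ k → s j + s k ≤ ‖w j - w k‖) :
    ∃ j ∈ N, ∃ k ∈ N, s j = r ∧ s k = r ∧ w k = -w j := by
  obtain ⟨M, hMN, hM⟩ := Finset.exists_subset_card_eq hN
  have hcos : ∀ j ∈ M, ∀ k ∈ M, j ≠ k → Real.cos ((w j).arg - (w k).arg) ≤ 1 / 2 :=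
    fun j hj k hk hjk => cos_arg_sub_arg_le_half hr (hs j (hMN hj)) (hs k (hMN hk))
      (hw j (hMN hj)) (hw k (hMN hk)) (hsep j (hMN hj) k (hMN hk) hjk)
  have hinj : Set.InjOn (fun j => (w j).arg) M := by
    intro j hj k hk hjk
    by_contra hne
    have := hcos j hj k hk hne
    simp only at hjk
    rw [hjk, sub_self, Real.cos_zero] at this
    norm_num at this
  have hrad : ∀ j ∈ M, ∀ k ∈ M, (w k).arg - (w j).arg = Real.pi / 3 → s j = r ∧ s k = r := by
    intro j hj k hk h
    have hjk : j ≠ k := by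
      rintro rfl
      linarith [Real.pi_pos]
    have hc : Real.cos ((w k).arg - (w j).arg) = 1 / 2 := by rw [h, Real.cos_pi_div_three]
    have hc' : Real.cos ((w j).arg - (w k).arg) = 1 / 2 := by rw [← neg_sub, Real.cos_neg, hc]
    exact ⟨eq_of_cos_arg_sub_arg_eq_half hr (hs j (hMN hj)) (hs k (hMN hk)) (hw j (hMN hj))
        (hw k (hMN hk)) (hsep j (hMN hj) k (hMN hk) hjk) hc',
      eq_of_cos_arg_sub_arg_eq_half hr (hs k (hMN hk)) (hs j (hMN hj)) (hw k (hMN hk))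
        (hw j (hMN hj)) (hsep k (hMN hk) j (hMN hj) hjk.symm) hc⟩
  obtain ⟨θ, h0, h1, h3, h4⟩ := exists_add_mem_of_card_eq_six (δ := Real.pi / 3)
    ((Finset.card_image_of_injOn hinj).trans hM)
    (by
      simp only [Finset.forall_mem_image]
      intro j hj k hk hlt
      exact Real.pi_div_three_le_of_cos_le_half (sub_pos.2 hlt)
        (hcos k hk j hj (by rintro rfl; exact lt_irrefl _ hlt)))
    (by
      simp only [Finset.forall_mem_image]
      intro j hj k hk hlt
      have hc := hcos k hk j hj (by rintro rfl; exact lt_irrefl _ hlt)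
      rw [← Real.cos_two_pi_sub] at hc
      have := Real.pi_div_three_le_of_cos_le_half
        (by linarith [Complex.arg_le_pi (w k), Complex.neg_pi_lt_arg (w j)]) hc
      linarith)
  simp only [Finset.mem_image] at h0 h1 h3 h4
  obtain ⟨j, hj, hj'⟩ := h0
  obtain ⟨j₁, hj₁, hj₁'⟩ := h1
  obtain ⟨k, hk, hk'⟩ := h3
  obtain ⟨k₁, hk₁, hk₁'⟩ := h4
  have hsj := (hrad j hj j₁ hj₁ (by linarith)).1
  have hsk := (hrad k hk k₁ hk₁ (by linarith)).1
  refine ⟨j, hMN hj, k, hMN hk, hsj, hsk, ?_⟩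
  have harg : ((w k).arg : ℂ) = (w j).arg + Real.pi := by
    rw [← Complex.ofReal_add, Complex.ofReal_inj]
    linarith
  rw [← Complex.norm_mul_exp_arg_mul_I (w k), ← Complex.norm_mul_exp_arg_mul_I (w j),
    hw j (hMN hj), hw k (hMN hk), hsj, hsk, harg, add_mul (_ : ℂ) _ Complex.I, Complex.exp_add,
    Complex.exp_pi_mul_I]
  ring

/-- In a nonempty finite family of non-overlapping discs some disc touches at most five others. -/
theorem exists_card_touching_le_five {ι : Type*} [DecidableEq ι] {A : Finset ι} (hA : A.Nonempty)
    {z : ι → ℂ} {r : ι → ℝ} (hr : ∀ i, 0 < r i)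
    (hsep : ∀ i j, i ≠ j → r i + r j ≤ dist (z i) (z j)) :
    ∃ i ∈ A, ((A.erase i).filter fun j => dist (z i) (z j) = r i + r j).card ≤ 5 := by
  obtain ⟨m, hm, hmin⟩ := A.exists_min_image r hA
  obtain ⟨i, hi, hmax⟩ := (A.filter fun j => r j = r m).exists_max_image (fun j => ‖z j‖)
    ⟨m, by simp [hm]⟩
  rw [Finset.mem_filter] at hi
  refine ⟨i, hi.1, ?_⟩
  by_contra! hcard
  obtain ⟨j, hj, k, hk, hsj, hsk, hjk⟩ := exists_antipodal_of_six_le_card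
    (w := fun j => z j - z i) (s := r) hcard (hr i)
    (fun j hj => hi.2 ▸ hmin j (Finset.mem_of_mem_erase (Finset.mem_filter.1 hj).1))
    (fun j hj => by
      rw [← (Finset.mem_filter.1 hj).2, dist_comm, dist_eq_norm])
    (fun j _ k _ hne => by
      simpa [dist_eq_norm] using hsep j k hne)
  have hA_of_mem {l : ι} (hl : l ∈ (A.erase i).filter fun j => dist (z i) (z j) = r i + r j) :
      l ∈ A := Finset.mem_of_mem_erase (Finset.mem_filter.1 hl).1
  have hj_le := hmax j (Finset.mem_filter.2 ⟨hA_of_mem hj, hsj.trans hi.2⟩)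
  have hk_le := hmax k (Finset.mem_filter.2 ⟨hA_of_mem hk, hsk.trans hi.2⟩)
  have hpar := parallelogram_law_with_norm ℝ (z i) (z j - z i)
  have hzk : z i - (z j - z i) = z k := by linear_combination -hjk
  rw [add_sub_cancel, hzk] at hpar
  have hpos : 0 < ‖z j - z i‖ := by
    rw [← dist_eq_norm, dist_comm, (Finset.mem_filter.1 hj).2]
    exact add_pos (hr i) (hr j)
  nlinarith [norm_nonneg (z j), norm_nonneg (z k), norm_nonneg (z i), mul_pos hpos hpos]

theorem exists_six_colouring_on {ι : Type*} [DecidableEq ι] {z : ι → ℂ} {r : ι → ℝ}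
    (hr : ∀ i, 0 < r i) (hsep : ∀ i j, i ≠ j → r i + r j ≤ dist (z i) (z j)) (A : Finset ι) :
    ∃ f : ι → Fin 6,
      ∀ i ∈ A, ∀ j ∈ A, i ≠ j → dist (z i) (z j) = r i + r j → f i ≠ f j := by
  induction A using Finset.strongInduction with
  | H A ih =>
    rcases A.eq_empty_or_nonempty with rfl | hA
    · exact ⟨fun _ => 0, by simp⟩
    obtain ⟨i, hi, hcard⟩ := exists_card_touching_le_five hA hr hsep
    obtain ⟨f, hf⟩ := ih _ (Finset.erase_ssubset hi)
    set N := (A.erase i).filter fun j => dist (z i) (z j) = r i + r j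
    obtain ⟨x, -, hx⟩ : ∃ x ∈ Finset.univ, x ∉ N.image f := by
      refine Finset.exists_mem_notMem_of_card_lt_card ?_
      rw [Finset.card_univ, Fintype.card_fin]
      exact Finset.card_image_le.trans_lt (by omega)
    have hfx {j : ι} (hj : j ∈ A) (hne : j ≠ i) (hd : dist (z i) (z j) = r i + r j) : f j ≠ x :=
      fun h => hx (Finset.mem_image.2
        ⟨j, Finset.mem_filter.2 ⟨Finset.mem_erase.2 ⟨hne, hj⟩, hd⟩, h⟩)
    refine ⟨Function.update f i x, fun j hj k hk hjk hd => ?_⟩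
    rcases eq_or_ne j i with rfl | hji
    · rw [Function.update_self, Function.update_of_ne hjk.symm]
      exact (hfx hk hjk.symm hd).symm
    rcases eq_or_ne k i with rfl | hki
    · rw [Function.update_self, Function.update_of_ne hjk]
      exact hfx hj hjk (by rw [dist_comm, hd, add_comm])
    · rw [Function.update_of_ne hji, Function.update_of_ne hki]
      exact hf j (Finset.mem_erase.2 ⟨hji, hj⟩) k (Finset.mem_erase.2 ⟨hki, hk⟩) hjk hd

/-- Six colours theorem for discs: every finite family of pairwise non-overlapping closed
discs in the plane with positive radii admits a proper colouring with six colours. -/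
theorem six_colours_theorem_for_discs (n : ℕ)
    (c : Fin n → EuclideanSpace ℝ (Fin 2)) (r : Fin n → ℝ)
    (hr : ∀ i, 0 < r i)
    (hsep : ∀ i j : Fin n, i ≠ j → r i + r j ≤ dist (c i) (c j)) :
    ∃ f : Fin n → Fin 6,
      ∀ i j : Fin n, i ≠ j → dist (c i) (c j) = r i + r j → f i ≠ f j := by
  let φ := Complex.orthonormalBasisOneI.repr.symm
  have hφ (i j : Fin n) : dist (φ (c i)) (φ (c j)) = dist (c i) (c j) := φ.dist_map _ _
  obtain ⟨f, hf⟩ := exists_six_colouring_on (z := fun i => φ (c i)) hr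
    (fun i j hij => (hsep i j hij).trans_eq (hφ i j).symm) Finset.univ
  exact ⟨f, fun i j hij hd =>
    hf i (Finset.mem_univ i) j (Finset.mem_univ j) hij ((hφ i j).trans hd)⟩
end
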